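/- Let n ≥ 1. On the open subset of ℝ^{2n} = ℝⁿ × ℝⁿ where U(X,Y) = ‖X‖² − ‖Y‖² ≠ 0, the CH-function F(X,Y) = (1/2)·arctan(V/U), with V(X,Y) = 2⟨X,Y⟩, satisfies the minimal hypersurface equation: (1 + ‖∇F‖²)·ΔF − Δ_∞F = 0 at every such point; equivalently, div(∇F/√(1+‖∇F‖²)) = 0, so the (multi-valued) graph of F is a minimal hypersurface in ℝ^{2n+1}. -/

import Mathlib

/-! Write `D = U² + V²` and `R = ‖X‖² + ‖Y‖²`. Where `U ≠ 0`, the gradient of the CH-function is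
`N / D` with `N = (U·Y − V·X, U·X + V·Y)` (`pd_CHfun`), and a direct computation gives
`‖∇F‖² = R / D` (`gradSq_CHfun`), `div N = 0`, `⟨N, ∇D⟩ = 0` and `⟨N, ∇R⟩ = 0`. Hence `F` is
harmonic (`lap_CHfun`), and `‖∇F‖²` is constant along the gradient flow of `F`
(`grad_dot_gradSq_CHfun`). Since `Δ_∞F = ½⟨∇F, ∇‖∇F‖²⟩` and
`div(∇F/√(1+‖∇F‖²)) = ΔF/√(1+‖∇F‖²) − ½⟨∇F, ∇‖∇F‖²⟩/(1+‖∇F‖²)^{3/2}`, every term of both forms of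
the minimal hypersurface equation vanishes (`minimal_of_harmonic`). -/

noncomputable section

variable {ι : Type*} [Fintype ι] [DecidableEq ι]

/-- The `i`-th partial derivative `∂F/∂zᵢ` of `F : ℝ^ι → ℝ` at `x`. -/
def pd (F : EuclideanSpace ℝ ι → ℝ) (x : EuclideanSpace ℝ ι) (i : ι) : ℝ :=
  fderiv ℝ F x (EuclideanSpace.single i 1)

/-- The Laplacian `ΔF = Σᵢ ∂²F/∂zᵢ²` at `x`. -/
def lap (F : EuclideanSpace ℝ ι → ℝ) (x : EuclideanSpace ℝ ι) : ℝ :=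
  ∑ i, fderiv ℝ (fun y => pd F y i) x (EuclideanSpace.single i 1)

/-- The infinity-Laplacian `Δ_∞F = Σ_{i,j} (∂F/∂zᵢ)(∂F/∂zⱼ)(∂²F/∂zᵢ∂zⱼ)` at `x`. -/
def infLap (F : EuclideanSpace ℝ ι → ℝ) (x : EuclideanSpace ℝ ι) : ℝ :=
  ∑ i, ∑ j, pd F x i * pd F x j * fderiv ℝ (fun y => pd F y i) x (EuclideanSpace.single j 1)

/-- The squared norm `‖∇F‖²` of the gradient of `F` at `x`. -/
def gradSq (F : EuclideanSpace ℝ ι → ℝ) (x : EuclideanSpace ℝ ι) : ℝ :=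
  ∑ i, (pd F x i) ^ 2

/-- `U(X,Y) = ‖X‖² - ‖Y‖²` on `ℝ^{2n} = ℝⁿ × ℝⁿ`. -/
def Ufun (n : ℕ) (z : EuclideanSpace ℝ (Fin n ⊕ Fin n)) : ℝ :=
  ∑ i : Fin n, (z (Sum.inl i)) ^ 2 - ∑ i : Fin n, (z (Sum.inr i)) ^ 2

/-- `V(X,Y) = 2⟨X,Y⟩` on `ℝ^{2n} = ℝⁿ × ℝⁿ`. -/
def Vfun (n : ℕ) (z : EuclideanSpace ℝ (Fin n ⊕ Fin n)) : ℝ :=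
  2 * ∑ i : Fin n, z (Sum.inl i) * z (Sum.inr i)

/-- The CH-function `F(X,Y) = (1/2)·arctan(V/U)`. -/
def CHfun (n : ℕ) (z : EuclideanSpace ℝ (Fin n ⊕ Fin n)) : ℝ :=
  (1 / 2) * Real.arctan (Vfun n z / Ufun n z)

section General

/-- Quotient rule for the Fréchet derivative of real-valued functions. -/
lemma hasFDerivAt_quot {E : Type*} [NormedAddCommGroup E] [NormedSpace ℝ E] {f g : E → ℝ}
    {f' g' : E →L[ℝ] ℝ} {z : E} (hf : HasFDerivAt f f' z) (hg : HasFDerivAt g g' z)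
    (h0 : g z ≠ 0) :
    HasFDerivAt (fun y => f y / g y) ((g z)⁻¹ • f' - (f z / g z ^ 2) • g') z := by
  have h := hf.mul ((hasDerivAt_inv h0).comp_hasFDerivAt z hg)
  simp only [div_eq_mul_inv]
  refine HasFDerivAt.congr_fderiv h ?_
  ext v
  simp
  ring

variable {κ : Type*} [Fintype κ] [DecidableEq κ]

lemma hasFDerivAt_gradSq {F : EuclideanSpace ℝ κ → ℝ} {z : EuclideanSpace ℝ κ}
    (hd : ∀ i, DifferentiableAt ℝ (fun y => pd F y i) z) :
    HasFDerivAt (gradSq F) (∑ i, (2 * pd F z i) • fderiv ℝ (fun y => pd F y i) z) z := by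
  unfold gradSq
  refine HasFDerivAt.fun_sum fun i _ => ?_
  simpa using (hd i).hasFDerivAt.pow 2

/-- A harmonic function whose gradient has constant norm along its own gradient flow satisfies
both forms of the minimal hypersurface equation. -/
lemma minimal_of_harmonic {F : EuclideanSpace ℝ κ → ℝ} {z : EuclideanSpace ℝ κ}
    (hd : ∀ i, DifferentiableAt ℝ (fun y => pd F y i) z) (hl : lap F z = 0)
    (hg : ∑ j, pd F z j * fderiv ℝ (gradSq F) z (EuclideanSpace.single j 1) = 0) :
    (1 + gradSq F z) * lap F z - infLap F z = 0 ∧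
    (∑ i, fderiv ℝ (fun y => pd F y i / Real.sqrt (1 + gradSq F y)) z
        (EuclideanSpace.single i 1)) = 0 := by
  have hG := hasFDerivAt_gradSq hd
  have hpos : 0 < 1 + gradSq F z := by
    have : 0 ≤ gradSq F z := Finset.sum_nonneg fun i _ => sq_nonneg _
    linarith
  constructor
  · have h2 : 2 * infLap F z = 0 := by
      rw [← hg, hG.fderiv, infLap, Finset.sum_comm, Finset.mul_sum]
      refine Finset.sum_congr rfl fun j _ => ?_
      simp only [sum_apply, smul_apply, smul_eq_mul,
        Finset.mul_sum]
      exact Finset.sum_congr rfl fun i _ => by ring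
    rw [hl]; linarith
  · have hs := ((hG.differentiableAt.hasFDerivAt.const_add 1).sqrt hpos.ne')
    have hsne : Real.sqrt (1 + gradSq F z) ≠ 0 := (Real.sqrt_pos.2 hpos).ne'
    have key : ∀ i, fderiv ℝ (fun y => pd F y i / Real.sqrt (1 + gradSq F y)) z
        (EuclideanSpace.single i 1) =
        fderiv ℝ (fun y => pd F y i) z (EuclideanSpace.single i 1)
            * (Real.sqrt (1 + gradSq F z))⁻¹ -
          pd F z i * fderiv ℝ (gradSq F) z (EuclideanSpace.single i 1)
            * (1 / (2 * Real.sqrt (1 + gradSq F z)) / Real.sqrt (1 + gradSq F z) ^ 2) := by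
      intro i
      rw [(hasFDerivAt_quot (hd i).hasFDerivAt hs hsne).fderiv]
      simp
      field_simp
    simp only [key]
    rw [Finset.sum_sub_distrib, ← Finset.sum_mul, ← Finset.sum_mul, hg]
    change lap F z * _ - _ = 0
    rw [hl]; ring

end General

/-- `R = ‖X‖² + ‖Y‖²`. -/
def CHR (n : ℕ) (z : EuclideanSpace ℝ (Fin n ⊕ Fin n)) : ℝ :=
  ∑ i : Fin n, (z (Sum.inl i)) ^ 2 + ∑ i : Fin n, (z (Sum.inr i)) ^ 2

/-- `D = U² + V²`. -/
def CHD (n : ℕ) (z : EuclideanSpace ℝ (Fin n ⊕ Fin n)) : ℝ :=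
  Ufun n z ^ 2 + Vfun n z ^ 2

/-- The numerator `N = D·∇F = (U·Y − V·X, U·X + V·Y)` of the gradient of the CH-function. -/
def CHN (n : ℕ) (z : EuclideanSpace ℝ (Fin n ⊕ Fin n)) : Fin n ⊕ Fin n → ℝ
  | Sum.inl i => Ufun n z * z (Sum.inr i) - Vfun n z * z (Sum.inl i)
  | Sum.inr i => Ufun n z * z (Sum.inl i) + Vfun n z * z (Sum.inr i)

section Concrete

variable {n : ℕ} (z : EuclideanSpace ℝ (Fin n ⊕ Fin n))

lemma differentiableAt_Ufun : DifferentiableAt ℝ (Ufun n) z := by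
  unfold Ufun; fun_prop

lemma differentiableAt_Vfun : DifferentiableAt ℝ (Vfun n) z := by
  unfold Vfun; fun_prop

lemma differentiableAt_CHR : DifferentiableAt ℝ (CHR n) z := by
  unfold CHR; fun_prop

lemma differentiableAt_CHD : DifferentiableAt ℝ (CHD n) z :=
  ((differentiableAt_Ufun z).pow 2).add ((differentiableAt_Vfun z).pow 2)

lemma differentiableAt_CHN (i : Fin n ⊕ Fin n) :
    DifferentiableAt ℝ (fun y => CHN n y i) z := by
  have := differentiableAt_Ufun z
  have := differentiableAt_Vfun z
  rcases i with i | i <;> simp only [CHN] <;> fun_prop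

lemma hasFDerivAt_coord (i : Fin n ⊕ Fin n) :
    HasFDerivAt (fun y : EuclideanSpace ℝ (Fin n ⊕ Fin n) => y i)
      (EuclideanSpace.proj i : EuclideanSpace ℝ (Fin n ⊕ Fin n) →L[ℝ] ℝ) z :=
  (EuclideanSpace.proj i : EuclideanSpace ℝ (Fin n ⊕ Fin n) →L[ℝ] ℝ).hasFDerivAt

lemma pd_Ufun (j : Fin n ⊕ Fin n) : fderiv ℝ (Ufun n) z (EuclideanSpace.single j 1) =
    Sum.elim (fun i => 2 * z (Sum.inl i)) (fun i => -2 * z (Sum.inr i)) j := by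
  have h : HasFDerivAt (Ufun n) _ z :=
    (HasFDerivAt.fun_sum (u := Finset.univ) fun i _ => (hasFDerivAt_coord z (Sum.inl i)).pow 2).sub
    (HasFDerivAt.fun_sum (u := Finset.univ) fun i _ => (hasFDerivAt_coord z (Sum.inr i)).pow 2)
  rw [h.fderiv]
  rcases j with j | j <;> simp

lemma pd_CHR (j : Fin n ⊕ Fin n) : fderiv ℝ (CHR n) z (EuclideanSpace.single j 1) = 2 * z j := by
  have h : HasFDerivAt (CHR n) _ z :=
    (HasFDerivAt.fun_sum (u := Finset.univ) fun i _ => (hasFDerivAt_coord z (Sum.inl i)).pow 2).add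
    (HasFDerivAt.fun_sum (u := Finset.univ) fun i _ => (hasFDerivAt_coord z (Sum.inr i)).pow 2)
  rw [h.fderiv]
  rcases j with j | j <;> simp

lemma pd_Vfun (j : Fin n ⊕ Fin n) : fderiv ℝ (Vfun n) z (EuclideanSpace.single j 1) =
    Sum.elim (fun i => 2 * z (Sum.inr i)) (fun i => 2 * z (Sum.inl i)) j := by
  have h : HasFDerivAt (Vfun n) _ z :=
    (HasFDerivAt.fun_sum (u := Finset.univ) fun i _ =>
      (hasFDerivAt_coord z (Sum.inl i)).mul (hasFDerivAt_coord z (Sum.inr i))).const_mul 2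
  rw [h.fderiv]
  rcases j with j | j <;> simp

/-- `∇D = 4·(U·X + V·Y, V·X − U·Y)`. -/
lemma pd_CHD (j : Fin n ⊕ Fin n) : fderiv ℝ (CHD n) z (EuclideanSpace.single j 1) =
    Sum.elim (fun i => 4 * CHN n z (Sum.inr i)) (fun i => -4 * CHN n z (Sum.inl i)) j := by
  have h : HasFDerivAt (CHD n) _ z :=
    ((differentiableAt_Ufun z).hasFDerivAt.pow 2).add ((differentiableAt_Vfun z).hasFDerivAt.pow 2)
  rw [h.fderiv]
  rcases j with j | j <;> simp [pd_Ufun, pd_Vfun, CHN] <;> ring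

lemma CHD_pos (hz : Ufun n z ≠ 0) : 0 < CHD n z := by
  unfold CHD; positivity

lemma pd_CHfun (hz : Ufun n z ≠ 0) (j : Fin n ⊕ Fin n) :
    pd (CHfun n) z j = CHN n z j / CHD n z := by
  have h : HasFDerivAt (CHfun n) _ z :=
    (hasFDerivAt_quot (differentiableAt_Vfun z).hasFDerivAt (differentiableAt_Ufun z).hasFDerivAt
      hz).arctan.const_mul (1 / 2)
  have hD := (CHD_pos z hz).ne'
  have hD' : 1 + (Vfun n z / Ufun n z) ^ 2 = CHD n z / Ufun n z ^ 2 := by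
    unfold CHD; field_simp
  rw [pd, h.fderiv, hD']
  rcases j with j | j <;> simp [pd_Ufun, pd_Vfun, CHN] <;> field_simp

/-- Membership in `{U ≠ 0}` is an open condition. -/
lemma eventually_Ufun_ne (hz : Ufun n z ≠ 0) : ∀ᶠ y in nhds z, Ufun n y ≠ 0 :=
  (differentiableAt_Ufun z).continuousAt.eventually_ne hz

lemma pd_CHfun_eventuallyEq (hz : Ufun n z ≠ 0) (j : Fin n ⊕ Fin n) :
    (fun y => pd (CHfun n) y j) =ᶠ[nhds z] fun y => CHN n y j / CHD n y :=
  (eventually_Ufun_ne z hz).mono fun y hy => pd_CHfun y hy j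

lemma sum_CHN_sq : ∑ j, CHN n z j ^ 2 = CHD n z * CHR n z := by
  rw [Fintype.sum_sum_type, CHR, mul_add, Finset.mul_sum, Finset.mul_sum,
    ← Finset.sum_add_distrib, ← Finset.sum_add_distrib]
  exact Finset.sum_congr rfl fun i _ => by simp only [CHN, CHD]; ring

lemma gradSq_CHfun (hz : Ufun n z ≠ 0) : gradSq (CHfun n) z = CHR n z / CHD n z := by
  have hD := (CHD_pos z hz).ne'
  simp only [gradSq, pd_CHfun z hz, div_pow]
  rw [← Finset.sum_div, sum_CHN_sq]
  field_simp

/-- `⟨N, ∇D⟩ = 0`. -/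
lemma CHN_dot_CHD :
    ∑ j, CHN n z j * fderiv ℝ (CHD n) z (EuclideanSpace.single j 1) = 0 := by
  simp only [pd_CHD]
  rw [Fintype.sum_sum_type, ← Finset.sum_add_distrib]
  exact Finset.sum_eq_zero fun i _ => by simp only [Sum.elim_inl, Sum.elim_inr]; ring

/-- `⟨N, ∇R⟩ = 0`. -/
lemma CHN_dot_CHR :
    ∑ j, CHN n z j * fderiv ℝ (CHR n) z (EuclideanSpace.single j 1) = 0 := by
  simp only [pd_CHR]
  rw [Fintype.sum_sum_type, ← Finset.sum_add_distrib]
  have : ∀ i : Fin n, CHN n z (Sum.inl i) * (2 * z (Sum.inl i)) +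
      CHN n z (Sum.inr i) * (2 * z (Sum.inr i)) =
      2 * Ufun n z * (2 * (z (Sum.inl i) * z (Sum.inr i))) -
      2 * Vfun n z * (z (Sum.inl i) ^ 2 - z (Sum.inr i) ^ 2) := fun i => by
    simp only [CHN]; ring
  simp only [this]
  rw [Finset.sum_sub_distrib, ← Finset.mul_sum, ← Finset.mul_sum, ← Finset.mul_sum,
    Finset.sum_sub_distrib]
  change 2 * Ufun n z * Vfun n z - 2 * Vfun n z * Ufun n z = 0
  ring

/-- `div N = 0`. -/
lemma div_CHN :
    ∑ j, fderiv ℝ (fun y => CHN n y j) z (EuclideanSpace.single j 1) = 0 := by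
  have hU := (differentiableAt_Ufun z).hasFDerivAt
  have hV := (differentiableAt_Vfun z).hasFDerivAt
  have hl : ∀ i : Fin n, fderiv ℝ (fun y => CHN n y (Sum.inl i)) z
      (EuclideanSpace.single (Sum.inl i) 1) = -Vfun n z := fun i => by
    have h : HasFDerivAt (fun y => CHN n y (Sum.inl i)) _ z :=
      (hU.mul (hasFDerivAt_coord z (Sum.inr i))).sub (hV.mul (hasFDerivAt_coord z (Sum.inl i)))
    rw [h.fderiv]
    simp [pd_Ufun, pd_Vfun]; ring
  have hr : ∀ i : Fin n, fderiv ℝ (fun y => CHN n y (Sum.inr i)) z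
      (EuclideanSpace.single (Sum.inr i) 1) = Vfun n z := fun i => by
    have h : HasFDerivAt (fun y => CHN n y (Sum.inr i)) _ z :=
      (hU.mul (hasFDerivAt_coord z (Sum.inl i))).add (hV.mul (hasFDerivAt_coord z (Sum.inr i)))
    rw [h.fderiv]
    simp [pd_Ufun, pd_Vfun]; ring
  rw [Fintype.sum_sum_type, ← Finset.sum_add_distrib]
  exact Finset.sum_eq_zero fun i _ => by rw [hl, hr]; ring

lemma lap_CHfun (hz : Ufun n z ≠ 0) : lap (CHfun n) z = 0 := by
  have hD := (CHD_pos z hz).ne'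
  have key : ∀ j, fderiv ℝ (fun y => pd (CHfun n) y j) z (EuclideanSpace.single j 1) =
      fderiv ℝ (fun y => CHN n y j) z (EuclideanSpace.single j 1) * (CHD n z)⁻¹ -
      CHN n z j * fderiv ℝ (CHD n) z (EuclideanSpace.single j 1) * (CHD n z ^ 2)⁻¹ := fun j => by
    rw [(pd_CHfun_eventuallyEq z hz j).fderiv_eq, (hasFDerivAt_quot (differentiableAt_CHN z j).hasFDerivAt
      (differentiableAt_CHD z).hasFDerivAt hD).fderiv]
    simp
    field_simp
  simp only [lap, key]
  rw [Finset.sum_sub_distrib, ← Finset.sum_mul, ← Finset.sum_mul, div_CHN, CHN_dot_CHD]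
  ring

/-- `⟨∇F, ∇‖∇F‖²⟩ = 0`. -/
lemma grad_dot_gradSq_CHfun (hz : Ufun n z ≠ 0) :
    ∑ j, pd (CHfun n) z j * fderiv ℝ (gradSq (CHfun n)) z (EuclideanSpace.single j 1) = 0 := by
  have hD := (CHD_pos z hz).ne'
  have he : gradSq (CHfun n) =ᶠ[nhds z] fun y => CHR n y / CHD n y :=
    (eventually_Ufun_ne z hz).mono fun y hy => gradSq_CHfun y hy
  have key : ∀ j, pd (CHfun n) z j *
      fderiv ℝ (gradSq (CHfun n)) z (EuclideanSpace.single j 1) =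
      CHN n z j * fderiv ℝ (CHR n) z (EuclideanSpace.single j 1) * (CHD n z ^ 2)⁻¹ -
      CHN n z j * fderiv ℝ (CHD n) z (EuclideanSpace.single j 1) *
        (CHR n z * (CHD n z ^ 3)⁻¹) := fun j => by
    rw [he.fderiv_eq, (hasFDerivAt_quot (differentiableAt_CHR z).hasFDerivAt
      (differentiableAt_CHD z).hasFDerivAt hD).fderiv, pd_CHfun z hz]
    simp
    field_simp
  simp only [key]
  rw [Finset.sum_sub_distrib, ← Finset.sum_mul, ← Finset.sum_mul, CHN_dot_CHR, CHN_dot_CHD]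
  ring

end Concrete

/-- the CH-function satisfies the minimal hypersurface equation
`(1 + ‖∇F‖²)·ΔF − Δ_∞F = 0` where `U ≠ 0`, equivalently `div(∇F/√(1+‖∇F‖²)) = 0`,
so its (multi-valued) graph is a minimal hypersurface in `ℝ^{2n+1}`. -/
theorem CH_minimal (n : ℕ) (hn : 1 ≤ n)
    (z : EuclideanSpace ℝ (Fin n ⊕ Fin n)) (hz : Ufun n z ≠ 0) :
    (1 + gradSq (CHfun n) z) * lap (CHfun n) z - infLap (CHfun n) z = 0 ∧
    (∑ i, fderiv ℝ
        (fun y => pd (CHfun n) y i / Real.sqrt (1 + gradSq (CHfun n) y)) z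
        (EuclideanSpace.single i 1)) = 0 := by
  exact minimal_of_harmonic
    (fun i => (hasFDerivAt_quot (differentiableAt_CHN z i).hasFDerivAt
      (differentiableAt_CHD z).hasFDerivAt (CHD_pos z hz).ne').differentiableAt.congr_of_eventuallyEq
        (pd_CHfun_eventuallyEq z hz i))
    (lap_CHfun z hz) (grad_dot_gradSq_CHfun z hz)
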